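/- Let (Δ; Ω, ≤) be a homological system over an Artin algebra Λ. Then the category F(Δ) of Δ-filtered modules is closed under direct summands: if M ∈ F(Δ) and M = M_1 ⊕ M_2 is a direct sum decomposition (i.e., M_1 and M_2 are submodules of M with M_1 + M_2 = M and M_1 ∩ M_2 = 0), then M_1 ∈ F(Δ) and M_2 ∈ F(Δ). -/

import Mathlib

universe u v

open DirectSum

/-- The height function of a finite preordered set `Ω`: `h ω` is `1` plus the length of the
longest strict chain `ω₀ < ω₁ < ⋯ < ωₙ = ω` ending at `ω` (so minimal elements have height 1). -/
noncomputable def heightFun {Ω : Type v} [Preorder Ω] [Fintype Ω] (ω : Ω) : ℕ :=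
  1 + (⨆ (p : LTSeries Ω) (_ : p.last = ω), (p.length : ℕ∞)).toNat

/-- `EverySESSplits Λ A B` says that every short exact sequence of `Λ`-modules
`0 → A → E → B → 0` splits; this is the statement `Ext¹_Λ(B, A) = 0`. -/
def EverySESSplits (Λ : Type u) [Ring Λ] (A B : Type u)
    [AddCommGroup A] [Module Λ A] [AddCommGroup B] [Module Λ B] : Prop :=
  ∀ (E : Type u) [AddCommGroup E] [Module Λ E] (f : A →ₗ[Λ] E) (g : E →ₗ[Λ] B),
    Function.Injective f → Function.Surjective g → LinearMap.range f = LinearMap.ker g →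
      ∃ s : B →ₗ[Λ] E, g.comp s = LinearMap.id

/-- A homological system `(Δ; Ω, ≤)` over the ring `Λ`:
`Ω` is a finite (pre)ordered index set; the `Δ ω` are pairwise nonisomorphic indecomposable
finitely generated `Λ`-modules satisfying (HS3) `Hom (Δ ω, Δ ω') ≠ 0 → ω ≤ ω'` and
(HS4) `Ext¹ (Δ ω, Δ ω') ≠ 0 → ω ≤ ω' ∧ ¬ ω' ≤ ω` (the latter expressed contrapositively via
splitting of all short exact sequences `0 → Δ ω' → E → Δ ω → 0`). -/
structure IsHomologicalSystem (Λ : Type u) [Ring Λ] {Ω : Type v} [Preorder Ω] [Fintype Ω]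
    (Δ : Ω → Type u) [∀ ω, AddCommGroup (Δ ω)] [∀ ω, Module Λ (Δ ω)] : Prop where
  fg : ∀ ω, Module.Finite Λ (Δ ω)
  nontrivial : ∀ ω, Nontrivial (Δ ω)
  indecomposable : ∀ ω (A B : Submodule Λ (Δ ω)), IsCompl A B → A = ⊥ ∨ B = ⊥
  pairwise_nonIso : ∀ ω ω', ω ≠ ω' → IsEmpty (Δ ω ≃ₗ[Λ] Δ ω')
  hs3 : ∀ ω ω' (f : Δ ω →ₗ[Λ] Δ ω'), f ≠ 0 → ω ≤ ω'
  hs4 : ∀ ω ω', ¬(ω ≤ ω' ∧ ¬ ω' ≤ ω) → EverySESSplits Λ (Δ ω') (Δ ω)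

/-- `IsDeltaFiltration Λ Δ t F` says that `⊥ = F 0 ⊊ F 1 ⊊ ⋯ ⊊ F t = ⊤` is a `Δ`-filtration
of `M`, i.e. each factor `F (i+1) / F i` is isomorphic to some `Δ ω`. -/
def IsDeltaFiltration (Λ : Type u) [Ring Λ] {Ω : Type v} [Preorder Ω] [Fintype Ω]
    (Δ : Ω → Type u) [∀ ω, AddCommGroup (Δ ω)] [∀ ω, Module Λ (Δ ω)]
    {M : Type u} [AddCommGroup M] [Module Λ M]
    (t : ℕ) (F : Fin (t + 1) → Submodule Λ M) : Prop :=
  F 0 = ⊥ ∧ F (Fin.last t) = ⊤ ∧ StrictMono F ∧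
    ∀ i : Fin t, ∃ ω : Ω,
      Nonempty ((F i.succ ⧸ (F i.castSucc).comap (F i.succ).subtype) ≃ₗ[Λ] Δ ω)

/-- `M ∈ 𝔉(Δ)`: the `Λ`-module `M` admits a `Δ`-filtration. -/
def MemFiltCat (Λ : Type u) [Ring Λ] {Ω : Type v} [Preorder Ω] [Fintype Ω]
    (Δ : Ω → Type u) [∀ ω, AddCommGroup (Δ ω)] [∀ ω, Module Λ (Δ ω)]
    (M : Type u) [AddCommGroup M] [Module Λ M] : Prop :=
  ∃ (t : ℕ) (F : Fin (t + 1) → Submodule Λ M), IsDeltaFiltration Λ Δ t F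

/-- `ℓ_ω(F)`: the number of factors of the filtration `F` isomorphic to `Δ ω`. -/
noncomputable def ellOmega (Λ : Type u) [Ring Λ] {Ω : Type v} [Preorder Ω] [Fintype Ω]
    (Δ : Ω → Type u) [∀ ω, AddCommGroup (Δ ω)] [∀ ω, Module Λ (Δ ω)]
    {M : Type u} [AddCommGroup M] [Module Λ M]
    (t : ℕ) (F : Fin (t + 1) → Submodule Λ M) (ω : Ω) : ℕ :=
  Nat.card {i : Fin t //
    Nonempty ((F i.succ ⧸ (F i.castSucc).comap (F i.succ).subtype) ≃ₗ[Λ] Δ ω)}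

/-- An `h`-filtration `0 = W (a+1) ⊆ W a ⊆ ⋯ ⊆ W 1 = M` of `M`: the `i`-th layer
`W i / W (i+1)` is a finite direct sum `⨁_{ω : h ω = i} (n ω) • Δ ω` of copies of the `Δ ω`
with `heightFun ω = i`. -/
def IsHFiltration (Λ : Type u) [Ring Λ] {Ω : Type v} [Preorder Ω] [Fintype Ω]
    (Δ : Ω → Type u) [∀ ω, AddCommGroup (Δ ω)] [∀ ω, Module Λ (Δ ω)]
    {M : Type u} [AddCommGroup M] [Module Λ M]
    (a : ℕ) (W : ℕ → Submodule Λ M) (n : Ω → ℕ) : Prop :=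
  W (a + 1) = ⊥ ∧ W 1 = ⊤ ∧ (∀ i, 1 ≤ i → i ≤ a → W (i + 1) ≤ W i) ∧
    ∀ i, 1 ≤ i → i ≤ a →
      Nonempty ((W i ⧸ (W (i + 1)).comap (W i).subtype) ≃ₗ[Λ]
        ⨁ ω : {ω : Ω // heightFun ω = i}, (Fin (n ω.1) → Δ ω.1))

/-- The trace `tr_L(N)` of `L` in `N`: the sum of the images of all `Λ`-homomorphisms `L → N`. -/
def traceSubmodule (Λ : Type u) [Ring Λ] (L N : Type u)
    [AddCommGroup L] [Module Λ L] [AddCommGroup N] [Module Λ N] : Submodule Λ N :=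
  ⨆ f : L →ₗ[Λ] N, LinearMap.range f

namespace HSProof

section basic
variable {Λ : Type u} [Ring Λ]

/-- Short exact sequence. -/
def SES {A M B : Type u} [AddCommGroup A] [Module Λ A] [AddCommGroup M] [Module Λ M]
    [AddCommGroup B] [Module Λ B] (f : A →ₗ[Λ] M) (g : M →ₗ[Λ] B) : Prop :=
  Function.Injective f ∧ Function.Surjective g ∧ ∀ x, g x = 0 ↔ ∃ a, f a = x

variable {A A' B D M N Q Q' X : Type u}
  [AddCommGroup A] [Module Λ A] [AddCommGroup A'] [Module Λ A'] [AddCommGroup B] [Module Λ B]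
  [AddCommGroup D] [Module Λ D] [AddCommGroup M] [Module Λ M] [AddCommGroup N] [Module Λ N]
  [AddCommGroup Q] [Module Λ Q] [AddCommGroup Q'] [Module Λ Q'] [AddCommGroup X] [Module Λ X]

theorem lift_surj (g : A →ₗ[Λ] B) (hg : Function.Surjective g) (h : A →ₗ[Λ] X)
    (hk : ∀ x, g x = 0 → h x = 0) : ∃ h' : B →ₗ[Λ] X, ∀ x, h' (g x) = h x := by
  refine ⟨((LinearMap.ker g).liftQ h (fun x hx => hk x hx)).comp
    (g.quotKerEquivOfSurjective hg).symm.toLinearMap, fun x => ?_⟩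
  have : (g.quotKerEquivOfSurjective hg).symm (g x) = (LinearMap.ker g).mkQ x := by
    rw [LinearEquiv.symm_apply_eq]; rfl
  rw [LinearMap.comp_apply, LinearEquiv.coe_coe, this]
  rfl

theorem lift_inj (i : A →ₗ[Λ] M) (hi : Function.Injective i) (h : X →ₗ[Λ] M)
    (hk : ∀ x, ∃ a, i a = h x) : ∃ h' : X →ₗ[Λ] A, ∀ x, i (h' x) = h x := by
  refine ⟨(LinearEquiv.ofInjective i hi).symm.toLinearMap.comp
    (h.codRestrict (LinearMap.range i) (fun x => hk x)), fun x => ?_⟩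
  have := (LinearEquiv.ofInjective i hi).apply_symm_apply
    (h.codRestrict (LinearMap.range i) (fun x => hk x) x)
  exact congrArg Subtype.val this

theorem iso_of_ker (g : M →ₗ[Λ] A) (hg : Function.Surjective g) (g' : M →ₗ[Λ] B)
    (hg' : Function.Surjective g') (hk : ∀ x, g x = 0 ↔ g' x = 0) : Nonempty (A ≃ₗ[Λ] B) := by
  obtain ⟨u, hu⟩ := lift_surj g hg g' (fun x => (hk x).1)
  refine ⟨LinearEquiv.ofBijective u ⟨?_, ?_⟩⟩
  · rw [injective_iff_map_eq_zero]
    intro a ha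
    obtain ⟨x, rfl⟩ := hg a
    rw [hu] at ha
    exact (hk x).2 ha
  · intro b
    obtain ⟨x, rfl⟩ := hg' b
    exact ⟨g x, hu x⟩

theorem ses_mkQ (f : A →ₗ[Λ] M) (hf : Function.Injective f) :
    SES f (LinearMap.range f).mkQ := by
  refine ⟨hf, Submodule.mkQ_surjective _, fun x => ?_⟩
  simp [Submodule.Quotient.mk_eq_zero]

theorem lift_split (i : A →ₗ[Λ] M) (q : M →ₗ[Λ] Q) (h : SES i q) (f : D →ₗ[Λ] Q)
    (hsp : EverySESSplits Λ A D) : ∃ s : D →ₗ[Λ] M, ∀ d, q (s d) = f d := by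
  let E : Submodule Λ (M × D) := LinearMap.ker (q.comp (LinearMap.fst Λ M D) - f.comp (LinearMap.snd Λ M D))
  have hE : ∀ x : M × D, x ∈ E ↔ q x.1 = f x.2 := by
    intro x
    simp [E, sub_eq_zero]
  have hqi : ∀ a, q (i a) = 0 := fun a => (h.2.2 _).2 ⟨a, rfl⟩
  let f1 : A →ₗ[Λ] E := ((LinearMap.inl Λ M D).comp i).codRestrict E (fun a => by
    rw [hE]; simp [hqi])
  let g1 : E →ₗ[Λ] D := (LinearMap.snd Λ M D).comp E.subtype
  obtain ⟨s, hs⟩ := hsp E f1 g1 (by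
      intro a b hab
      have := congrArg (fun z : E => z.1.1) hab
      exact h.1 this) (by
      intro d
      obtain ⟨m, hm⟩ := h.2.1 (f d)
      exact ⟨⟨(m, d), (hE _).2 hm⟩, rfl⟩) (by
      ext ⟨⟨m, d⟩, hx⟩
      rw [hE] at hx
      simp only [LinearMap.mem_range, LinearMap.mem_ker]
      constructor
      · rintro ⟨a, ha⟩
        rw [← ha]; rfl
      · intro hd
        have hd : d = 0 := hd
        subst hd
        obtain ⟨a, ha⟩ := (h.2.2 m).1 (by simpa using hx)
        exact ⟨a, Subtype.ext (Prod.ext ha rfl)⟩)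
  refine ⟨(LinearMap.fst Λ M D).comp (E.subtype.comp s), fun d => ?_⟩
  have h1 := (hE _).1 (s d).2
  have h2 : (s d).1.2 = d := LinearMap.congr_fun hs d
  rw [h2] at h1
  exact h1

theorem swap_lemma (i : A →ₗ[Λ] M) (q : M →ₗ[Λ] Q) (h : SES i q) (f : D →ₗ[Λ] Q)
    (g : Q →ₗ[Λ] Q') (h' : SES f g) (hsp : EverySESSplits Λ A D) :
    ∃ (M' : Type u) (_ : AddCommGroup M') (_ : Module Λ M') (s : D →ₗ[Λ] M) (π : M →ₗ[Λ] M')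
      (q' : M' →ₗ[Λ] Q'), SES s π ∧ SES (π.comp i) q' := by
  obtain ⟨s, hs⟩ := lift_split i q h f hsp
  have hsi : Function.Injective s := by
    intro a b hab
    apply h'.1
    rw [← hs, ← hs, hab]
  have hS := ses_mkQ s hsi
  have hgf : ∀ d, g (f d) = 0 := fun a => (h'.2.2 _).2 ⟨a, rfl⟩
  have hqi : ∀ a, q (i a) = 0 := fun a => (h.2.2 _).2 ⟨a, rfl⟩
  obtain ⟨q', hq'⟩ := lift_surj (LinearMap.range s).mkQ hS.2.1 (g.comp q) (by
    intro x hx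
    obtain ⟨d, rfl⟩ := (hS.2.2 x).1 hx
    simp [hs, hgf])
  refine ⟨_, _, _, s, (LinearMap.range s).mkQ, q', hS, ?_, ?_, ?_⟩
  · rw [injective_iff_map_eq_zero]
    intro a ha
    obtain ⟨d, hd⟩ := (hS.2.2 (i a)).1 ha
    have : d = 0 := by
      apply h'.1
      rw [← hs, hd, hqi, map_zero]
    rw [this, map_zero] at hd
    exact h.1 (by rw [← hd, map_zero])
  · intro y
    obtain ⟨z, rfl⟩ := h'.2.1 y
    obtain ⟨m, rfl⟩ := h.2.1 z
    exact ⟨_, hq' m⟩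
  · intro y
    obtain ⟨m, rfl⟩ := hS.2.1 y
    rw [hq']
    constructor
    · intro hm
      obtain ⟨d, hd⟩ := (h'.2.2 (q m)).1 hm
      obtain ⟨a, ha⟩ := (h.2.2 (m - s d)).1 (by rw [map_sub, hs, hd, sub_self])
      refine ⟨a, ?_⟩
      have h0 : (LinearMap.range s).mkQ (s d) = 0 := (hS.2.2 _).2 ⟨d, rfl⟩
      rw [LinearMap.comp_apply, ha, map_sub, h0, sub_zero]
    · rintro ⟨a, ha⟩
      have := congrArg q' ha
      rw [LinearMap.comp_apply, hq', hq'] at this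
      rw [← this]
      simp [hqi]

theorem quot_lemma (f : D →ₗ[Λ] A) (g : A →ₗ[Λ] A') (h : SES f g) (i : A →ₗ[Λ] M)
    (q : M →ₗ[Λ] B) (h' : SES i q) :
    ∃ (M' : Type u) (_ : AddCommGroup M') (_ : Module Λ M') (π : M →ₗ[Λ] M')
      (i' : A' →ₗ[Λ] M') (q' : M' →ₗ[Λ] B), SES (i.comp f) π ∧ SES i' q' := by
  have hS := ses_mkQ (i.comp f) (h'.1.comp h.1)
  have hgf : ∀ d, g (f d) = 0 := fun a => (h.2.2 _).2 ⟨a, rfl⟩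
  have hqi : ∀ a, q (i a) = 0 := fun a => (h'.2.2 _).2 ⟨a, rfl⟩
  obtain ⟨q', hq'⟩ := lift_surj _ hS.2.1 q (by
    intro x hx
    obtain ⟨d, rfl⟩ := (hS.2.2 x).1 hx
    simp [hqi])
  obtain ⟨i', hi'⟩ := lift_surj g h.2.1 ((LinearMap.range (i.comp f)).mkQ.comp i) (by
    intro x hx
    obtain ⟨d, rfl⟩ := (h.2.2 x).1 hx
    exact (hS.2.2 _).2 ⟨d, rfl⟩)
  refine ⟨_, _, _, _, i', q', hS, ?_, ?_, ?_⟩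
  · rw [injective_iff_map_eq_zero]
    intro a ha
    obtain ⟨x, rfl⟩ := h.2.1 a
    rw [hi'] at ha
    obtain ⟨d, hd⟩ := (hS.2.2 _).1 ha
    rw [← h'.1 hd, hgf]
  · intro b
    obtain ⟨m, rfl⟩ := h'.2.1 b
    exact ⟨_, hq' m⟩
  · intro y
    obtain ⟨m, rfl⟩ := hS.2.1 y
    rw [hq']
    constructor
    · intro hm
      obtain ⟨a, rfl⟩ := (h'.2.2 m).1 hm
      exact ⟨g a, hi' a⟩
    · rintro ⟨a, ha⟩
      obtain ⟨x, rfl⟩ := h.2.1 a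
      rw [hi'] at ha
      have := congrArg q' ha
      rw [LinearMap.comp_apply, hq', hq', hqi] at this
      exact this.symm

theorem pull_lemma (f : D →ₗ[Λ] M) (g : M →ₗ[Λ] Q) (h : SES f g) (i : A →ₗ[Λ] Q)
    (q : Q →ₗ[Λ] B) (h' : SES i q) :
    ∃ (W : Type u) (_ : AddCommGroup W) (_ : Module Λ W) (j : W →ₗ[Λ] M)
      (f' : D →ₗ[Λ] W) (g' : W →ₗ[Λ] A), SES j (q.comp g) ∧ SES f' g' ∧ ∀ d, j (f' d) = f d := by
  let W := LinearMap.ker (q.comp g)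
  have hgf : ∀ d, g (f d) = 0 := fun a => (h.2.2 _).2 ⟨a, rfl⟩
  have hqi : ∀ a, q (i a) = 0 := fun a => (h'.2.2 _).2 ⟨a, rfl⟩
  obtain ⟨g', hg'⟩ := lift_inj i h'.1 (g.comp W.subtype) (by
    rintro ⟨x, hx⟩
    exact (h'.2.2 _).1 hx)
  have hj : SES W.subtype (q.comp g) := by
    refine ⟨Subtype.val_injective, h'.2.1.comp h.2.1, fun x => ?_⟩
    constructor
    · intro hx
      exact ⟨⟨x, hx⟩, rfl⟩
    · rintro ⟨⟨y, hy⟩, rfl⟩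
      exact hy
  obtain ⟨f', hf'⟩ := lift_inj W.subtype hj.1 f (fun d => (hj.2.2 _).1 (by simp [hgf]))
  refine ⟨W, inferInstance, inferInstance, W.subtype, f', g', hj, ⟨?_, ?_, ?_⟩, hf'⟩
  · intro a b hab
    apply h.1
    rw [← hf', ← hf', hab]
  · intro a
    obtain ⟨m, hm⟩ := h.2.1 (i a)
    obtain ⟨w, hw⟩ := (hj.2.2 m).1 (by simp [hm, hqi])
    refine ⟨w, h'.1 ?_⟩
    rw [hg', ← hm, ← hw]; rfl
  · intro w
    constructor
    · intro hw
      have := hg' w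
      rw [hw, map_zero] at this
      obtain ⟨d, hd⟩ := (h.2.2 _).1 this.symm
      exact ⟨d, hj.1 (by rw [hf', hd])⟩
    · rintro ⟨d, rfl⟩
      apply h'.1
      rw [hg', LinearMap.comp_apply, hf', hgf, map_zero]

theorem replace_lemma (f : A →ₗ[Λ] M) (g : M →ₗ[Λ] B) (h : SES f g) (p : M →ₗ[Λ] A)
    (hp : ∀ a, p (f a) = a) (j : A →ₗ[Λ] M) (hj : Function.Bijective (p.comp j)) :
    ∃ g' : M →ₗ[Λ] B, SES j g' := by
  let u := LinearEquiv.ofBijective (p.comp j) hj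
  have hu : ∀ a, p (j a) = u a := fun a => rfl
  refine ⟨g.comp (LinearMap.id - j.comp (u.symm.toLinearMap.comp p)), ?_, ?_, ?_⟩
  · exact Function.Injective.of_comp (f := p) hj.1
  · intro b
    obtain ⟨y, rfl⟩ := h.2.1 b
    refine ⟨y - f (p y), ?_⟩
    have h0 : g (f (p y)) = 0 := (h.2.2 _).2 ⟨_, rfl⟩
    simp [hp, h0]
  · intro x
    constructor
    · intro hx
      obtain ⟨a, ha⟩ := (h.2.2 _).1 hx
      have h1 : a = 0 := by
        rw [← hp a, ha]
        simp [hu]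
      rw [h1, map_zero] at ha
      refine ⟨u.symm (p x), ?_⟩
      exact (sub_eq_zero.1 ha.symm).symm
    · rintro ⟨a, rfl⟩
      simp [hu]

end basic

section filt
variable {Λ : Type u} [Ring Λ] {Ω : Type v}
    (Δ : Ω → Type u) [∀ ω, AddCommGroup (Δ ω)] [∀ ω, Module Λ (Δ ω)]

/-- `M` is filtered by the modules in the list, bottom first. -/
def Filt : List Ω → ∀ (M : Type u) [AddCommGroup M] [Module Λ M], Prop
  | [], M, _, _ => Subsingleton M
  | ω :: L, M, _, _ => ∃ (M' : Type u) (_ : AddCommGroup M') (_ : Module Λ M')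
      (f : Δ ω →ₗ[Λ] M) (g : M →ₗ[Λ] M'), SES f g ∧ Filt L M'

theorem Filt.iso {L : List Ω} {M N : Type u} [AddCommGroup M] [Module Λ M] [AddCommGroup N]
    [Module Λ N] (h : Filt (Λ := Λ) Δ L M) (e : M ≃ₗ[Λ] N) : Filt (Λ := Λ) Δ L N := by
  cases L with
  | nil =>
    have : Subsingleton M := h
    exact e.symm.toEquiv.subsingleton
  | cons a L =>
    obtain ⟨M', _, _, f, g, hS, hL⟩ := h
    refine ⟨M', _, _, e.toLinearMap.comp f, g.comp e.symm.toLinearMap,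
      ⟨e.injective.comp hS.1, hS.2.1.comp e.symm.surjective, fun x => ?_⟩, hL⟩
    have := hS.2.2 (e.symm x)
    simp only [LinearMap.comp_apply, LinearEquiv.coe_coe]
    rw [this]
    simp only [LinearEquiv.eq_symm_apply]

theorem Filt.ext {L₁ L₂ : List Ω} {A M B : Type u} [AddCommGroup A] [Module Λ A]
    [AddCommGroup M] [Module Λ M] [AddCommGroup B] [Module Λ B]
    (i : A →ₗ[Λ] M) (q : M →ₗ[Λ] B) (hS : SES i q)
    (h₁ : Filt (Λ := Λ) Δ L₁ A) (h₂ : Filt (Λ := Λ) Δ L₂ B) : Filt (Λ := Λ) Δ (L₁ ++ L₂) M := by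
  induction L₁ generalizing A M with
  | nil =>
    have : Subsingleton A := h₁
    refine Filt.iso Δ h₂ (LinearEquiv.ofBijective q ⟨?_, hS.2.1⟩).symm
    rw [injective_iff_map_eq_zero]
    intro x hx
    obtain ⟨a, rfl⟩ := (hS.2.2 x).1 hx
    rw [Subsingleton.elim a 0, map_zero]
  | cons a L ih =>
    obtain ⟨A', _, _, f, g, hS', hL⟩ := h₁
    obtain ⟨M', _, _, π, i', q', h1, h2⟩ := quot_lemma f g hS' i q hS
    exact ⟨M', _, _, _, π, h1, ih i' q' h2 hL⟩

theorem Filt.split {L₁ L₂ : List Ω} {M : Type u}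
    [AddCommGroup M] [Module Λ M] (h : Filt (Λ := Λ) Δ (L₁ ++ L₂) M) :
    ∃ (W : Type u) (_ : AddCommGroup W) (_ : Module Λ W)
      (B : Type u) (_ : AddCommGroup B) (_ : Module Λ B) (i : W →ₗ[Λ] M) (q : M →ₗ[Λ] B),
      SES i q ∧ Filt (Λ := Λ) Δ L₁ W ∧ Filt (Λ := Λ) Δ L₂ B := by
  induction L₁ generalizing M with
  | nil =>
    refine ⟨PUnit, inferInstance, inferInstance, M, inferInstance, inferInstance, 0,
      LinearMap.id, ⟨fun _ _ _ => rfl, Function.surjective_id, fun x => ?_⟩,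
      (inferInstance : Subsingleton PUnit), h⟩
    simp [eq_comm]
  | cons a L ih =>
    obtain ⟨M', _, _, f, g, hS', hL⟩ := h
    obtain ⟨W', _, _, B, _, _, i, q, hS, h1, h2⟩ := ih hL
    obtain ⟨W, _, _, j, f', g', hj, hf, -⟩ := pull_lemma f g hS' i q hS
    exact ⟨W, _, _, B, _, _, j, _, hj, ⟨W', _, _, f', g', hf, h1⟩, h2⟩

theorem Filt.retract {L : List Ω} {A M Q : Type u}
    [AddCommGroup A] [Module Λ A] [AddCommGroup M] [Module Λ M] [AddCommGroup Q] [Module Λ Q]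
    (i : A →ₗ[Λ] M) (q : M →ₗ[Λ] Q) (hS : SES i q)
    (h : Filt (Λ := Λ) Δ L Q) (hsp : ∀ b ∈ L, EverySESSplits Λ A (Δ b)) :
    ∃ p : M →ₗ[Λ] A, ∀ a, p (i a) = a := by
  induction L generalizing M Q with
  | nil =>
    have : Subsingleton Q := h
    let e := LinearEquiv.ofBijective i ⟨hS.1, fun x => (hS.2.2 x).1 (Subsingleton.elim _ _)⟩
    exact ⟨e.symm.toLinearMap, fun a => e.symm_apply_apply a⟩
  | cons b L ih =>
    obtain ⟨Q', _, _, f, g, hS', hL⟩ := h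
    obtain ⟨M', _, _, s, π, q', h1, h2⟩ := swap_lemma i q hS f g hS' (hsp b (by simp))
    obtain ⟨p, hp⟩ := ih _ q' h2 hL (fun c hc => hsp c (by simp [hc]))
    exact ⟨p.comp π, hp⟩

theorem Filt.swap {L : List Ω} {a b : Ω} {M : Type u} [AddCommGroup M] [Module Λ M]
    (h : Filt (Λ := Λ) Δ (a :: b :: L) M) (hsp : EverySESSplits Λ (Δ a) (Δ b)) :
    Filt (Λ := Λ) Δ (b :: a :: L) M := by
  obtain ⟨Q, _, _, i, q, hS, Q', _, _, f, g, hS', hL⟩ := h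
  obtain ⟨M', _, _, s, π, q', h1, h2⟩ := swap_lemma i q hS f g hS' hsp
  exact ⟨M', _, _, s, π, h1, Q', _, _, _, q', h2, hL⟩

theorem Filt.move {L₁ L₂ : List Ω} {a : Ω} {M : Type u} [AddCommGroup M] [Module Λ M]
    (h : Filt (Λ := Λ) Δ (a :: (L₁ ++ L₂)) M)
    (hsp : ∀ b ∈ L₁, EverySESSplits Λ (Δ a) (Δ b)) :
    Filt (Λ := Λ) Δ (L₁ ++ a :: L₂) M := by
  induction L₁ generalizing M with
  | nil => exact h
  | cons b L ih =>
    obtain ⟨M', _, _, f, g, hS, hL⟩ := Filt.swap Δ h (hsp b (by simp))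
    exact ⟨M', _, _, f, g, hS, ih hL (fun c hc => hsp c (by simp [hc]))⟩

theorem Filt.partition (h : Ω → ℕ) (k : ℕ)
    (hsp : ∀ a b, h a ≤ h b → EverySESSplits Λ (Δ a) (Δ b))
    {L : List Ω} {M : Type u} [AddCommGroup M] [Module Λ M]
    (hL : Filt (Λ := Λ) Δ L M) (hk : ∀ b ∈ L, h b ≤ k) :
    ∃ L₁ L₂ : List Ω, L.Perm (L₁ ++ L₂) ∧ (∀ b ∈ L₁, h b = k) ∧ (∀ b ∈ L₂, h b < k) ∧
      Filt (Λ := Λ) Δ (L₁ ++ L₂) M := by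
  induction L generalizing M with
  | nil => exact ⟨[], [], List.Perm.refl _, by simp, by simp, hL⟩
  | cons a L ih =>
    obtain ⟨M', _, _, f, g, hS, hL⟩ := hL
    obtain ⟨L₁, L₂, hp, h1, h2, h3⟩ := ih hL (fun b hb => hk b (by simp [hb]))
    have hF : Filt (Λ := Λ) Δ (a :: (L₁ ++ L₂)) M := ⟨M', _, _, f, g, hS, h3⟩
    rcases (hk a (by simp)).eq_or_lt with hlt | hlt
    · refine ⟨a :: L₁, L₂, hp.cons a, ?_, h2, hF⟩
      simpa [hlt] using h1
    · refine ⟨L₁, a :: L₂, (hp.cons a).trans List.perm_middle.symm, h1, ?_,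
        Filt.move Δ hF (fun b hb => hsp _ _ (by rw [h1 b hb]; exact hlt.le))⟩
      simpa [hlt] using h2

theorem Filt.hom_zero {L : List Ω} {A B : Type u} [AddCommGroup A] [Module Λ A]
    [AddCommGroup B] [Module Λ B] (hB : Filt (Λ := Λ) Δ L B)
    (h : ∀ b ∈ L, ∀ u : A →ₗ[Λ] Δ b, u = 0) (u : A →ₗ[Λ] B) : u = 0 := by
  induction L generalizing B with
  | nil =>
    have : Subsingleton B := hB
    ext x
    exact Subsingleton.elim _ _
  | cons b L ih =>
    obtain ⟨M', _, _, f, g, hS, hL⟩ := hB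
    have h0 := ih hL (fun b hb => h b (by simp [hb])) (g.comp u)
    obtain ⟨u', hu'⟩ := lift_inj f hS.1 u (fun x => (hS.2.2 _).1 (LinearMap.congr_fun h0 x))
    have := h b (by simp) u'
    ext x
    rw [← hu', this]
    simp

theorem Filt.exchange {L₁ L₂ : List Ω} {a : Ω} {M M' : Type u} [AddCommGroup M] [Module Λ M]
    [AddCommGroup M'] [Module Λ M'] (f : Δ a →ₗ[Λ] M) (g : M →ₗ[Λ] M') (hS : SES f g)
    (hF : Filt (Λ := Λ) Δ (L₁ ++ L₂) M')
    (h₁ : ∀ b ∈ L₁, EverySESSplits Λ (Δ a) (Δ b))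
    (h₂ : ∀ b ∈ L₂, ∀ u : Δ a →ₗ[Λ] Δ b, u = 0)
    (hloc : ∀ u u' : Δ a →ₗ[Λ] Δ a, u + u' = LinearMap.id →
      Function.Bijective u ∨ Function.Bijective u')
    (e e' : M →ₗ[Λ] M) (hee : e + e' = LinearMap.id) :
    (∃ (M'' : Type u) (_ : AddCommGroup M'') (_ : Module Λ M'') (π : M →ₗ[Λ] M''),
      SES (e.comp f) π ∧ Filt (Λ := Λ) Δ (L₁ ++ L₂) M'') ∨
    (∃ (M'' : Type u) (_ : AddCommGroup M'') (_ : Module Λ M'') (π : M →ₗ[Λ] M''),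
      SES (e'.comp f) π ∧ Filt (Λ := Λ) Δ (L₁ ++ L₂) M'') := by
  obtain ⟨W', _, _, B, _, _, i, q, hiq, hW', hB⟩ := Filt.split Δ hF
  obtain ⟨W, _, _, j, f', g', hj, hf, hjf⟩ := pull_lemma f g hS i q hiq
  obtain ⟨p, hp⟩ := Filt.retract Δ f' g' hf hW' h₁
  have key : ∀ e : M →ₗ[Λ] M, ∃ t : Δ a →ₗ[Λ] W, ∀ x, j (t x) = (e.comp f) x := by
    intro e
    have h0 := Filt.hom_zero Δ hB h₂ ((q.comp g).comp (e.comp f))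
    exact lift_inj j hj.1 _ (fun x => (hj.2.2 _).1 (LinearMap.congr_fun h0 x))
  have key2 : ∀ (e : M →ₗ[Λ] M) (t : Δ a →ₗ[Λ] W), (∀ x, j (t x) = (e.comp f) x) →
      Function.Bijective (p.comp t) →
      (∃ (M'' : Type u) (_ : AddCommGroup M'') (_ : Module Λ M'') (π : M →ₗ[Λ] M''),
      SES (e.comp f) π ∧ Filt (Λ := Λ) Δ (L₁ ++ L₂) M'') := by
    intro e t ht hbij
    obtain ⟨g2, hg2⟩ := replace_lemma f' g' hf p hp t hbij
    obtain ⟨M'', _, _, π, i', q', h1, h2⟩ := quot_lemma t g2 hg2 j _ hj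
    have : j.comp t = e.comp f := LinearMap.ext ht
    rw [this] at h1
    exact ⟨M'', _, _, π, h1, Filt.ext Δ i' q' h2 hW' hB⟩
  obtain ⟨t, ht⟩ := key e
  obtain ⟨t', ht'⟩ := key e'
  have hsum : p.comp t + p.comp t' = LinearMap.id := by
    ext x
    have : t x + t' x = f' x := by
      apply hj.1
      rw [map_add, ht, ht', hjf]
      exact LinearMap.congr_fun hee (f x)
    simp only [LinearMap.add_apply, LinearMap.comp_apply, LinearMap.id_apply]
    rw [← map_add, this, hp]
  rcases hloc _ _ hsum with hb | hb
  · exact Or.inl (key2 e t ht hb)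
  · exact Or.inr (key2 e' t' ht' hb)

theorem Filt.summand (h : Ω → ℕ)
    (hsp : ∀ a b, h a ≤ h b → EverySESSplits Λ (Δ a) (Δ b))
    (hhom : ∀ a b, h b < h a → ∀ u : Δ a →ₗ[Λ] Δ b, u = 0)
    (hloc : ∀ a, ∀ u u' : Δ a →ₗ[Λ] Δ a, u + u' = LinearMap.id →
      Function.Bijective u ∨ Function.Bijective u')
    (n : ℕ) (L : List Ω) (hn : L.length = n) {N N' : Type u} [AddCommGroup N] [Module Λ N]
    [AddCommGroup N'] [Module Λ N'] (hF : Filt (Λ := Λ) Δ L (N × N')) :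
    (∃ L₁, Filt (Λ := Λ) Δ L₁ N) ∧ (∃ L₂, Filt (Λ := Λ) Δ L₂ N') := by
  induction n generalizing L N N' with
  | zero =>
    have : L = [] := List.length_eq_zero_iff.1 hn
    subst this
    have : Subsingleton (N × N') := hF
    refine ⟨⟨[], ?_⟩, ⟨[], ?_⟩⟩
    · exact (Function.Injective.subsingleton (f := fun x : N => (x, (0 : N')))
        (fun x y hxy => congrArg Prod.fst hxy) : Subsingleton N)
    · exact (Function.Injective.subsingleton (f := fun x : N' => ((0 : N), x))
        (fun x y hxy => congrArg Prod.snd hxy) : Subsingleton N')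
  | succ n ih =>
    classical
    have hne : L.toFinset.Nonempty := by
      cases L with
      | nil => simp at hn
      | cons a L => exact ⟨a, by simp⟩
    obtain ⟨c, hc, hmax⟩ := Finset.exists_max_image L.toFinset h hne
    obtain ⟨L₁, L₂, hp, h1, h2, hF⟩ := Filt.partition Δ h (h c) hsp hF
      (fun b hb => hmax b (by simpa using hb))
    cases L₁ with
    | nil =>
      have := h2 c (by
        have := hp.mem_iff (a := c)
        simpa using this.1 (by simpa using hc))
      exact absurd this (lt_irrefl _)
    | cons a L₁ =>
      have hlen : (L₁ ++ L₂).length = n := by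
        have := hp.length_eq
        simp at this ⊢
        omega
      have ha : h a = h c := h1 a (by simp)
      obtain ⟨M', _, _, f, g, hS, hF'⟩ := hF
      have hex := Filt.exchange Δ f g hS hF'
        (fun b hb => hsp _ _ (by rw [ha, h1 b (by simp [hb])]))
        (fun b hb => hhom _ _ (by rw [ha]; exact h2 b hb)) (hloc a)
        ((LinearMap.inl Λ N N').comp (LinearMap.fst Λ N N'))
        ((LinearMap.inr Λ N N').comp (LinearMap.snd Λ N N')) (by ext <;> simp)
      rcases hex with ⟨M'', _, _, π, hπ, hM⟩ | ⟨M'', _, _, π, hπ, hM⟩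
      · let j : Δ a →ₗ[Λ] N := (LinearMap.fst Λ N N').comp f
        have hj : Function.Injective j := by
          intro x y hxy
          exact hπ.1 (congrArg (fun z => (z, (0 : N'))) hxy)
        have hSj := ses_mkQ j hj
        obtain ⟨e⟩ := iso_of_ker π hπ.2.1
          (LinearMap.prodMap (LinearMap.range j).mkQ (LinearMap.id (R := Λ) (M := N')))
          (by exact Function.Surjective.prodMap hSj.2.1 Function.surjective_id) (by
            rintro ⟨x, y⟩
            rw [hπ.2.2]
            have := hSj.2.2 x
            rw [LinearMap.prodMap_apply, Prod.mk_eq_zero, this]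
            constructor
            · rintro ⟨d, hd⟩
              exact ⟨⟨d, congrArg Prod.fst hd⟩, (congrArg Prod.snd hd).symm⟩
            · rintro ⟨⟨d, hd⟩, hy⟩
              exact ⟨d, Prod.ext hd (Eq.symm hy)⟩)
        obtain ⟨⟨K, hK⟩, h'⟩ := ih _ hlen (Filt.iso Δ hM e)
        exact ⟨⟨a :: K, _, _, _, j, _, hSj, hK⟩, h'⟩
      · let j : Δ a →ₗ[Λ] N' := (LinearMap.snd Λ N N').comp f
        have hj : Function.Injective j := by
          intro x y hxy
          exact hπ.1 (congrArg (fun z => ((0 : N), z)) hxy)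
        have hSj := ses_mkQ j hj
        obtain ⟨e⟩ := iso_of_ker π hπ.2.1
          (LinearMap.prodMap (LinearMap.id (R := Λ) (M := N)) (LinearMap.range j).mkQ)
          (by exact Function.Surjective.prodMap Function.surjective_id hSj.2.1) (by
            rintro ⟨x, y⟩
            rw [hπ.2.2]
            have := hSj.2.2 y
            rw [LinearMap.prodMap_apply, Prod.mk_eq_zero, this]
            constructor
            · rintro ⟨d, hd⟩
              exact ⟨(congrArg Prod.fst hd).symm, ⟨d, congrArg Prod.snd hd⟩⟩
            · rintro ⟨hx, ⟨d, hd⟩⟩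
              exact ⟨d, Prod.ext (Eq.symm hx) hd⟩)
        obtain ⟨h', ⟨K, hK⟩⟩ := ih _ hlen (Filt.iso Δ hM e)
        exact ⟨h', ⟨a :: K, _, _, _, j, _, hSj, hK⟩⟩

end filt

section convert
variable {Λ : Type u} [Ring Λ] {Ω : Type v} [Preorder Ω] [Fintype Ω]
    (Δ : Ω → Type u) [∀ ω, AddCommGroup (Δ ω)] [∀ ω, Module Λ (Δ ω)]

theorem filt_of_mem {M : Type u} [AddCommGroup M] [Module Λ M] (h : MemFiltCat Λ Δ M) :
    ∃ L, Filt (Λ := Λ) Δ L M := by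
  obtain ⟨t, F, h0, ht, hm, hq⟩ := h
  have key : ∀ i : Fin (t + 1), ∃ L, Filt (Λ := Λ) Δ L (F i) := by
    intro i
    induction i using Fin.induction with
    | zero =>
      refine ⟨[], ?_⟩
      rw [h0]
      exact (inferInstance : Subsingleton (⊥ : Submodule Λ M))
    | succ i ih =>
      obtain ⟨L, hL⟩ := ih
      obtain ⟨ω, ⟨e⟩⟩ := hq i
      have hle : F i.castSucc ≤ F i.succ := (hm Fin.castSucc_lt_succ).le
      have hω : Filt (Λ := Λ) Δ [ω] (Δ ω) := by
        refine ⟨PUnit, inferInstance, inferInstance, LinearMap.id, 0,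
          ⟨Function.injective_id, fun _ => ⟨0, rfl⟩, fun x => ?_⟩,
          (inferInstance : Subsingleton PUnit)⟩
        simp
      refine ⟨L ++ [ω], Filt.ext Δ (Submodule.inclusion hle)
        (e.toLinearMap.comp (Submodule.mkQ _)) ⟨Submodule.inclusion_injective hle,
          e.surjective.comp (Submodule.mkQ_surjective _), fun x => ?_⟩ hL hω⟩
      simp only [LinearMap.comp_apply, LinearEquiv.coe_coe, LinearEquiv.map_eq_zero_iff,
        Submodule.mkQ_apply, Submodule.Quotient.mk_eq_zero, Submodule.mem_comap]
      constructor
      · intro hx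
        exact ⟨⟨x, hx⟩, rfl⟩
      · rintro ⟨a, rfl⟩
        exact a.2
  obtain ⟨L, hL⟩ := key (Fin.last t)
  rw [ht] at hL
  exact ⟨L, Filt.iso Δ hL Submodule.topEquiv⟩

theorem mem_of_filt (hnt : ∀ ω, Nontrivial (Δ ω)) (L : List Ω)
    {M : Type u} [AddCommGroup M] [Module Λ M] (h : Filt (Λ := Λ) Δ L M) :
    MemFiltCat Λ Δ M := by
  induction L generalizing M with
  | nil =>
    have : Subsingleton M := h
    exact ⟨0, fun _ => ⊥, rfl, Subsingleton.elim _ _, fun i j hij => absurd hij (by omega),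
      fun i => i.elim0⟩
  | cons a L ih =>
    obtain ⟨M', _, _, f, g, hS, hL⟩ := h
    obtain ⟨t, F, h0, ht, hm, hq⟩ := ih hL
    refine ⟨t + 1, Fin.cons ⊥ (fun i => (F i).comap g), rfl, ?_, ?_, ?_⟩
    · rw [← Fin.succ_last, Fin.cons_succ, ht, Submodule.comap_top]
    · rw [Fin.strictMono_iff_lt_succ]
      intro i
      induction i using Fin.cases with
      | zero =>
        rw [Fin.castSucc_zero, Fin.cons_zero, Fin.cons_succ, h0, bot_lt_iff_ne_bot]
        intro hbot
        obtain ⟨x, hx⟩ := exists_ne (0 : Δ a)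
        have hm : f x ∈ Submodule.comap g ⊥ := by
          rw [Submodule.mem_comap, Submodule.mem_bot]
          exact (hS.2.2 _).2 ⟨x, rfl⟩
        rw [hbot, Submodule.mem_bot] at hm
        exact hx (hS.1 (by rw [hm, map_zero]))
      | succ i =>
        rw [Fin.cons_succ, ← Fin.succ_castSucc, Fin.cons_succ]
        exact Submodule.comap_strictMono_of_surjective hS.2.1 (hm Fin.castSucc_lt_succ)
    · intro i
      induction i using Fin.cases with
      | zero =>
        refine ⟨a, ?_⟩
        rw [Fin.castSucc_zero, Fin.cons_zero, Fin.cons_succ, h0]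
        obtain ⟨r, hr⟩ := lift_inj f hS.1 (Submodule.comap g ⊥).subtype (by
          rintro ⟨x, hx⟩
          exact (hS.2.2 _).1 hx)
        refine iso_of_ker (Submodule.mkQ _) (Submodule.mkQ_surjective _) r ?_ ?_
        · intro d
          refine ⟨⟨f d, (hS.2.2 _).2 ⟨d, rfl⟩⟩, hS.1 ?_⟩
          rw [hr]; rfl
        · intro x
          rw [Submodule.mkQ_apply, Submodule.Quotient.mk_eq_zero, Submodule.mem_comap,
            Submodule.mem_bot, ← hr, map_eq_zero_iff f hS.1]
      | succ i =>
        obtain ⟨ω, ⟨e⟩⟩ := hq i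
        refine ⟨ω, ?_⟩
        rw [Fin.cons_succ, ← Fin.succ_castSucc, Fin.cons_succ]
        let r : (F i.succ).comap g →ₗ[Λ] F i.succ := g.restrict (fun x hx => hx)
        refine iso_of_ker (Submodule.mkQ _) (Submodule.mkQ_surjective _)
          (e.toLinearMap.comp ((Submodule.mkQ _).comp r)) ?_ ?_
        · refine e.surjective.comp ((Submodule.mkQ_surjective _).comp ?_)
          rintro ⟨y, hy⟩
          obtain ⟨x, rfl⟩ := hS.2.1 y
          exact ⟨⟨x, hy⟩, rfl⟩
        · intro x
          simp only [LinearMap.comp_apply, LinearEquiv.coe_coe, LinearEquiv.map_eq_zero_iff,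
            Submodule.mkQ_apply, Submodule.Quotient.mk_eq_zero, Submodule.mem_comap]
          rfl

end convert

theorem fitting {Λ : Type u} [Ring Λ] {D : Type u} [AddCommGroup D] [Module Λ D]
    [IsNoetherian Λ D] [IsArtinian Λ D]
    (hind : ∀ A B : Submodule Λ D, IsCompl A B → A = ⊥ ∨ B = ⊥)
    (u u' : D →ₗ[Λ] D) (h : u + u' = LinearMap.id) :
    Function.Bijective u ∨ Function.Bijective u' := by
  obtain ⟨n, hn⟩ := Filter.eventually_atTop.1 (LinearMap.eventually_isCompl_ker_pow_range_pow u)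
  have hc := hn (n + 1) (Nat.le_succ n)
  rcases hind _ _ hc with hk | hr
  · left
    apply IsArtinian.bijective_of_injective_endomorphism
    rw [LinearMap.ker_eq_bot, Module.End.coe_pow] at hk
    exact Function.Injective.of_comp (f := u^[n]) (by rwa [← Function.iterate_succ])
  · right
    have h0 : u ^ (n + 1) = 0 := LinearMap.range_eq_bot.1 hr
    have hu' : u' = 1 - u := by
      rw [eq_sub_iff_add_eq, add_comm]; exact h
    have : IsUnit u' := by
      rw [hu']
      exact IsNilpotent.isUnit_one_sub ⟨n + 1, h0⟩
    exact (Module.End.isUnit_iff u').1 this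

end HSProof

/-- Corollary 9.3: the category `𝔉(Δ)` of `Δ`-filtered modules over an Artin algebra `Λ` is
closed under direct summands: if `M ∈ 𝔉(Δ)` and `M = M₁ ⊕ M₂`, then `M₁, M₂ ∈ 𝔉(Δ)`. -/
theorem memFiltCat_closed_under_direct_summands
    {R : Type u} [CommRing R] [IsArtinianRing R]
    {Λ : Type u} [Ring Λ] [Algebra R Λ] [Module.Finite R Λ]
    {Ω : Type v} [Preorder Ω] [Fintype Ω] [Nonempty Ω]
    (Δ : Ω → Type u) [∀ ω, AddCommGroup (Δ ω)] [∀ ω, Module Λ (Δ ω)]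
    (hs : IsHomologicalSystem Λ Δ)
    (M : Type u) [AddCommGroup M] [Module Λ M] [Module.Finite Λ M]
    (hM : MemFiltCat Λ Δ M)
    (M₁ M₂ : Submodule Λ M) (hsum : M₁ ⊔ M₂ = ⊤) (hdisj : M₁ ⊓ M₂ = ⊥) :
    MemFiltCat Λ Δ ↥M₁ ∧ MemFiltCat Λ Δ ↥M₂ := by
  have : IsArtinianRing Λ := IsArtinianRing.of_finite R Λ
  have hfg := hs.fg
  classical
  let h : Ω → ℕ := fun ω => (Finset.univ.filter (fun x => x ≤ ω)).card
  have hmono : ∀ a b, a ≤ b → h a ≤ h b := by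
    intro a b hab
    refine Finset.card_le_card (fun x hx => ?_)
    simp only [Finset.mem_filter, Finset.mem_univ, true_and] at hx ⊢
    exact hx.trans hab
  have hstrict : ∀ a b, a ≤ b → ¬ b ≤ a → h a < h b := by
    intro a b hab hba
    refine Finset.card_lt_card ((Finset.ssubset_iff_of_subset (fun x hx => ?_)).2 ⟨b, ?_, ?_⟩)
    · simp only [Finset.mem_filter, Finset.mem_univ, true_and] at hx ⊢
      exact hx.trans hab
    · simp
    · simpa using hba
  obtain ⟨L, hL⟩ := HSProof.filt_of_mem Δ hM
  have hc : IsCompl M₁ M₂ := IsCompl.of_eq hdisj hsum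
  have hL' := HSProof.Filt.iso Δ hL (Submodule.prodEquivOfIsCompl M₁ M₂ hc).symm
  obtain ⟨⟨L₁, h₁⟩, ⟨L₂, h₂⟩⟩ := HSProof.Filt.summand Δ h
    (fun a b hab => hs.hs4 b a (fun hlt => absurd (hstrict b a hlt.1 hlt.2) (not_lt.2 hab)))
    (fun a b hab u => by
      by_contra hu
      exact absurd (hmono a b (hs.hs3 a b u hu)) (not_le.2 hab))
    (fun a => HSProof.fitting (hs.indecomposable a)) _ L rfl hL'
  exact ⟨HSProof.mem_of_filt Δ hs.nontrivial L₁ h₁, HSProof.mem_of_filt Δ hs.nontrivial L₂ h₂⟩
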